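/- In any triangulated category, for an object G and non-negative integers i, j one has ⟨G⟩_i ⋄ ⟨G⟩_j = ⟨G⟩_{i+j+1}. Consequently, if a triangulated category D possesses a strong generator, then every classical generator of D is a strong generator. -/

import Mathlib

/-!
The octahedral axiom is not available, but everything is needed only up to direct summands, and
up to summands the operation `*` is associative in every pretriangulated category.

The device is a factorization criterion `Fac A B M`: there is a map `a : A₀ ⟶ M` with `A₀ ∈ A`
such that every map out of `M` killed by `a` factors through an object of `B`. The criterion
characterizes the direct summands of objects of `A * B` (`Fac.exists_retract` and
`fac_of_mem_star`), and the class it defines is closed under sums, shifts and summands when `A`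
and `B` are, so it describes `A ⋄ B` (`mem_diamond_iff`). Completing morphisms of triangles then
gives `A * (B * C) ⊆ (A * B) ⋄ C` and `(A * B) * C ⊆ A ⋄ (B * C)` (`fac_assoc_left`,
`fac_assoc_right`): the object an octahedron would provide is constructed as a cone, and the
distinguished triangle that would be missing is replaced by the factorization property, which
only requires the long exact sequences.

Associativity of `⋄` gives the formula for levels by induction on `j`. If `H` is a strong
generator lying in `⟨G⟩ₙ`, the formula places every `⟨H⟩ₖ` inside some `⟨G⟩ₘ`.
-/

open CategoryTheory Limits Pretriangulated ZeroObject

universe v u v₁ u₁ v₂ u₂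

namespace Rouquier

variable {C : Type u} [Category.{v} C] [HasZeroObject C] [HasShift C ℤ] [Preadditive C]
  [∀ n : ℤ, (shiftFunctor C n).Additive] [Pretriangulated C]

/-- Membership in `⟨I⟩`, the smallest full subcategory containing `I` that is closed under
shifts, finite direct sums and direct summands. -/
inductive hullMem (I : Set C) : C → Prop
  | base {X : C} (hX : X ∈ I) : hullMem I X
  | zero : hullMem I 0
  | shift {X : C} (n : ℤ) (hX : hullMem I X) : hullMem I (X⟦n⟧)
  | sum {X Y : C} (hX : hullMem I X) (hY : hullMem I Y) : hullMem I (X ⊞ Y)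
  | summand {X : C} (Y : C) (hX : hullMem I X) (i : Y ⟶ X) (r : X ⟶ Y) (hir : i ≫ r = 𝟙 Y) :
      hullMem I Y

/-- `⟨I⟩`. -/
def hull (I : Set C) : Set C := {X | hullMem I X}

/-- `I₁ * I₂`: objects `M` fitting in a distinguished triangle `M₁ → M → M₂ → M₁[1]`
with `Mᵢ ∈ Iᵢ`. -/
def star (I₁ I₂ : Set C) : Set C :=
  {M | ∃ (M₁ M₂ : C) (_ : M₁ ∈ I₁) (_ : M₂ ∈ I₂) (f : M₁ ⟶ M) (g : M ⟶ M₂)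
    (h : M₂ ⟶ M₁⟦(1 : ℤ)⟧), Triangle.mk f g h ∈ distTriang C}

/-- `I₁ ⋄ I₂ := ⟨I₁ * I₂⟩`. -/
def diamond (I₁ I₂ : Set C) : Set C := hull (star I₁ I₂)

/-- `⟨G⟩ₖ`, defined by `⟨G⟩₀ := ⟨G⟩` and `⟨G⟩ₖ := ⟨G⟩ₖ₋₁ ⋄ ⟨G⟩₀`. -/
def level (G : C) : ℕ → Set C
  | 0 => hull {G}
  | (k + 1) => diamond (level G k) (hull {G})

/-- `G` is a strong generator if `⟨G⟩_g = C` for some `g`. -/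
def IsStrongGenerator (G : C) : Prop := ∃ g : ℕ, level G g = Set.univ

/-- `G` is a classical generator if `⋃ i, ⟨G⟩ᵢ = C`. -/
def IsClassicalGenerator (G : C) : Prop := (⋃ i : ℕ, level G i) = Set.univ

/-- The generation time of `G`: the smallest `g` with `⟨G⟩_g = C` (`⊤` if none). -/
noncomputable def generationTime (G : C) : ℕ∞ :=
  sInf {d : ℕ∞ | ∃ g : ℕ, (g : ℕ∞) = d ∧ level G g = Set.univ}

variable (C) in
/-- The Rouquier dimension of a triangulated category: the infimum of the generation
times of strong generators (`⊤` if there is no strong generator). -/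
noncomputable def rouquierDim : ℕ∞ :=
  sInf {d : ℕ∞ | ∃ (G : C) (g : ℕ), (g : ℕ∞) = d ∧ level G g = Set.univ}

end Rouquier

namespace Rouquier

variable {C : Type u} [Category.{v} C] [HasZeroObject C] [HasShift C ℤ] [Preadditive C]
  [∀ n : ℤ, (shiftFunctor C n).Additive] [Pretriangulated C]

/-! ### Closure properties of hulls and levels -/

lemma hull_mono {I J : Set C} (h : I ⊆ J) : hull I ⊆ hull J := by
  intro X hX
  change hullMem I X at hX
  change hullMem J X
  induction hX with
  | base hX => exact .base (h hX)
  | zero => exact .zero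
  | shift n _ ih => exact .shift n ih
  | sum _ _ ih₁ ih₂ => exact .sum ih₁ ih₂
  | summand Y _ i r hir ih => exact .summand Y ih i r hir

lemma hull_hull_subset (I : Set C) : hull (hull I) ⊆ hull I := by
  intro X hX
  change hullMem (hull I) X at hX
  change hullMem I X
  induction hX with
  | base hX => exact hX
  | zero => exact .zero
  | shift n _ ih => exact .shift n ih
  | sum _ _ ih₁ ih₂ => exact .sum ih₁ ih₂
  | summand Y _ i r hir ih => exact .summand Y ih i r hir

lemma star_mono {A A' B B' : Set C} (hA : A ⊆ A') (hB : B ⊆ B') : star A B ⊆ star A' B' := by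
  rintro M ⟨M₁, M₂, h₁, h₂, f, g, h, hT⟩
  exact ⟨M₁, M₂, hA h₁, hB h₂, f, g, h, hT⟩

lemma diamond_mono {A A' B B' : Set C} (hA : A ⊆ A') (hB : B ⊆ B') :
    diamond A B ⊆ diamond A' B' :=
  hull_mono (star_mono hA hB)

lemma hull_diamond_subset (A B : Set C) : hull (diamond A B) ⊆ diamond A B :=
  hull_hull_subset _

lemma hull_level_subset (G : C) : ∀ n : ℕ, hull (level G n) ⊆ level G n
  | 0 => hull_hull_subset _
  | _ + 1 => hull_hull_subset _

/-! ### Exactness and completion of morphisms for distinguished triangles -/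

section

variable {X Y Z : C} {f : X ⟶ Y} {g : Y ⟶ Z} {d : Z ⟶ X⟦(1 : ℤ)⟧}

lemma exists_desc₂ (hT : Triangle.mk f g d ∈ distTriang C) {W : C} (k : Y ⟶ W)
    (hk : f ≫ k = 0) : ∃ t : Z ⟶ W, k = g ≫ t :=
  Triangle.yoneda_exact₂ _ hT k hk

lemma exists_desc₃ (hT : Triangle.mk f g d ∈ distTriang C) {W : C} (k : Z ⟶ W)
    (hk : g ≫ k = 0) : ∃ t : X⟦(1 : ℤ)⟧ ⟶ W, k = d ≫ t :=
  Triangle.yoneda_exact₃ _ hT k hk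

lemma exists_lift₂ (hT : Triangle.mk f g d ∈ distTriang C) {W : C} (k : W ⟶ Y)
    (hk : k ≫ g = 0) : ∃ t : W ⟶ X, k = t ≫ f :=
  Triangle.coyoneda_exact₂ _ hT k hk

lemma exists_lift₃ (hT : Triangle.mk f g d ∈ distTriang C) {W : C} (k : W ⟶ Z)
    (hk : k ≫ d = 0) : ∃ t : W ⟶ Y, k = t ≫ g :=
  Triangle.coyoneda_exact₃ _ hT k hk

lemma exists_middle (hT : Triangle.mk f g d ∈ distTriang C)
    {X' Y' Z' : C} {f' : X' ⟶ Y'} {g' : Y' ⟶ Z'} {d' : Z' ⟶ X'⟦(1 : ℤ)⟧}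
    (hT' : Triangle.mk f' g' d' ∈ distTriang C) (a : X ⟶ X') (c : Z ⟶ Z')
    (h : d ≫ a⟦(1 : ℤ)⟧' = c ≫ d') : ∃ b : Y ⟶ Y', f ≫ b = a ≫ f' ∧ g ≫ c = b ≫ g' :=
  complete_distinguished_triangle_morphism₂ _ _ hT hT' a c h

end

/-! ### The factorization criterion -/

/-- The factorization criterion: some map `a : A₀ ⟶ M` with `A₀ ∈ A` has the property that every
map out of `M` killed by `a` factors through an object of `B`. -/
def Fac (A B : Set C) (M : C) : Prop :=
  ∃ (A₀ : C) (_ : A₀ ∈ A) (a : A₀ ⟶ M), ∀ (Z : C) (h : M ⟶ Z), a ≫ h = 0 →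
    ∃ (B₀ : C) (_ : B₀ ∈ B) (s : M ⟶ B₀) (t : B₀ ⟶ Z), s ≫ t = h

lemma fac_of_mem_star {A B : Set C} {M : C} (hM : M ∈ star A B) : Fac A B M := by
  obtain ⟨M₁, M₂, h₁, h₂, f, g, k, hT⟩ := hM
  refine ⟨M₁, h₁, f, fun Z h hh => ?_⟩
  obtain ⟨t, ht⟩ := exists_desc₂ hT h hh
  exact ⟨M₂, h₂, g, t, ht.symm⟩

lemma Fac.of_retract {A B : Set C} {M E : C} (hE : Fac A B E) (i : M ⟶ E) (r : E ⟶ M)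
    (hir : i ≫ r = 𝟙 M) : Fac A B M := by
  obtain ⟨A₀, hA, a, H⟩ := hE
  refine ⟨A₀, hA, a ≫ r, fun Z h hh => ?_⟩
  obtain ⟨B₀, hB, s, t, hst⟩ := H Z (r ≫ h) (by simpa using hh)
  exact ⟨B₀, hB, i ≫ s, t, by rw [Category.assoc, hst, reassoc_of% hir]⟩

/-- An object satisfying the factorization criterion is a direct summand of an object of
`A * B`. -/
lemma Fac.exists_retract {A B : Set C} {M : C} (hM : Fac A B M) :
    ∃ (E : C) (_ : E ∈ star A B) (i : M ⟶ E) (r : E ⟶ M), i ≫ r = 𝟙 M := by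
  obtain ⟨A₀, hA, a, H⟩ := hM
  obtain ⟨Y, c, d, hT⟩ := distinguished_cocone_triangle a
  obtain ⟨B₀, hB, α, β, hαβ⟩ := H Y c (comp_distTriang_mor_zero₁₂ _ hT)
  have hcd : c ≫ d = 0 := comp_distTriang_mor_zero₂₃ _ hT
  -- `E` is the pullback of `M ⟶ Y` along `β`, built as an extension of `B₀` by `A₀`.
  obtain ⟨E, ι, p, hE⟩ := distinguished_cocone_triangle₂ (β ≫ d)
  obtain ⟨q, hq₁, hq₂⟩ := exists_middle hE hT (𝟙 A₀) β (by simp)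
  obtain ⟨s, hs⟩ := exists_lift₃ hE α (by
    rw [reassoc_of% hαβ, hcd])
  obtain ⟨t, ht⟩ := exists_lift₂ hT (𝟙 M - s ≫ q) (by
    rw [Preadditive.sub_comp, Category.assoc, ← hq₂, ← reassoc_of% hs, hαβ]
    simp)
  refine ⟨E, ⟨A₀, B₀, hA, hB, ι, p, β ≫ d, hE⟩, s + t ≫ ι, q, ?_⟩
  rw [Preadditive.add_comp, Category.assoc, hq₁, Category.id_comp, ← ht]
  abel

lemma Fac.sum {A B : Set C} (hA : hull A ⊆ A) (hB : hull B ⊆ B) {M N : C}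
    (hM : Fac A B M) (hN : Fac A B N) : Fac A B (M ⊞ N) := by
  obtain ⟨A₁, hA₁, a₁, H₁⟩ := hM
  obtain ⟨A₂, hA₂, a₂, H₂⟩ := hN
  refine ⟨A₁ ⊞ A₂, hA (.sum (.base hA₁) (.base hA₂)), biprod.map a₁ a₂, fun Z h hh => ?_⟩
  obtain ⟨B₁, hB₁, s₁, t₁, h₁⟩ := H₁ Z (biprod.inl ≫ h) (by
    rw [← biprod.inl_map_assoc a₁ a₂, hh, comp_zero])
  obtain ⟨B₂, hB₂, s₂, t₂, h₂⟩ := H₂ Z (biprod.inr ≫ h) (by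
    rw [← biprod.inr_map_assoc a₁ a₂, hh, comp_zero])
  refine ⟨B₁ ⊞ B₂, hB (.sum (.base hB₁) (.base hB₂)), biprod.map s₁ s₂, biprod.desc t₁ t₂, ?_⟩
  ext <;> simp [h₁, h₂]

lemma Fac.shift {A B : Set C} (hA : hull A ⊆ A) (hB : hull B ⊆ B) {M : C}
    (hM : Fac A B M) (n : ℤ) : Fac A B (M⟦n⟧) := by
  obtain ⟨A₀, hA₀, a, H⟩ := hM
  refine ⟨A₀⟦n⟧, hA (.shift n (.base hA₀)), a⟦n⟧', fun Z h hh => ?_⟩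
  let adj := (shiftEquiv C n).toAdjunction
  obtain ⟨B₀, hB₀, s, t, hst⟩ := H _ (adj.homEquiv M Z h) (by
    refine (adj.homEquiv_naturality_left a h).symm.trans ?_
    have hh' : (shiftEquiv C n).functor.map a ≫ h = 0 := hh
    rw [hh', Adjunction.homEquiv_unit]
    simp)
  refine ⟨B₀⟦n⟧, hB (.shift n (.base hB₀)), s⟦n⟧', (adj.homEquiv B₀ Z).symm t, ?_⟩
  refine (adj.homEquiv_naturality_left_symm s t).symm.trans ?_
  exact (congrArg (adj.homEquiv M Z).symm hst).trans (Equiv.symm_apply_apply _ _)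

lemma mem_diamond_iff {A B : Set C} (hA : hull A ⊆ A) (hB : hull B ⊆ B) {M : C} :
    M ∈ diamond A B ↔ Fac A B M := by
  constructor
  · intro hM
    change hullMem (star A B) M at hM
    induction hM with
    | base hX => exact fac_of_mem_star hX
    | zero =>
      exact ⟨0, hA .zero, 0, fun Z h _ => ⟨0, hB .zero, 0, 0, (isZero_zero C).eq_of_src _ _⟩⟩
    | shift n _ ih => exact ih.shift hA hB n
    | sum _ _ ih₁ ih₂ => exact ih₁.sum hA hB ih₂
    | summand Y _ i r hir ih => exact ih.of_retract i r hir
  · intro hM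
    obtain ⟨E, hE, i, r, hir⟩ := hM.exists_retract
    exact .summand M (.base hE) i r hir

/-- Replacing an object of `⟨A * B⟩` by an object of `A * B` of which it is a summand does not
affect the criterion in the first variable. -/
lemma Fac.left_star {A B D : Set C} (hA : hull A ⊆ A) (hB : hull B ⊆ B) {M : C}
    (hM : Fac (diamond A B) D M) : Fac (star A B) D M := by
  obtain ⟨E', hE', e, H⟩ := hM
  obtain ⟨E, hE, i, r, hir⟩ := ((mem_diamond_iff hA hB).1 hE').exists_retract
  refine ⟨E, hE, r ≫ e, fun Z h hh => H Z h ?_⟩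
  rw [← Category.id_comp e, ← hir, Category.assoc, Category.assoc, ← Category.assoc r, hh,
    comp_zero]

/-- Replacing an object of `⟨B * D⟩` by an object of `B * D` of which it is a summand does not
affect the criterion in the second variable. -/
lemma Fac.right_star {A B D : Set C} (hB : hull B ⊆ B) (hD : hull D ⊆ D) {M : C}
    (hM : Fac A (diamond B D) M) : Fac A (star B D) M := by
  obtain ⟨A₀, hA₀, a, H⟩ := hM
  refine ⟨A₀, hA₀, a, fun Z h hh => ?_⟩
  obtain ⟨F', hF', s, t, hst⟩ := H Z h hh
  obtain ⟨F, hF, i, r, hir⟩ := ((mem_diamond_iff hB hD).1 hF').exists_retract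
  exact ⟨F, hF, s ≫ i, r ≫ t, by rw [Category.assoc, reassoc_of% hir, hst]⟩

lemma Fac.mono {A A' B B' : Set C} (hA : A ⊆ A') (hB : B ⊆ B') {M : C} (hM : Fac A B M) :
    Fac A' B' M := by
  obtain ⟨A₀, hA₀, a, H⟩ := hM
  refine ⟨A₀, hA hA₀, a, fun Z h hh => ?_⟩
  obtain ⟨B₀, hB₀, s, t, hst⟩ := H Z h hh
  exact ⟨B₀, hB hB₀, s, t, hst⟩

/-! ### Associativity up to direct summands -/

/-- `A * (B * D) ⊆ (A * B) ⋄ D`, in terms of the factorization criterion. -/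
lemma fac_assoc_left {A B D : Set C} {M : C} (hM : M ∈ star A (star B D)) :
    Fac (star A B) D M := by
  obtain ⟨A₀, F, hA, ⟨B₀, D₀, hB, hD, v, w, x, hF⟩, f, g, ψ, hT⟩ := hM
  -- `K` is the extension of `B₀` by `A₀` pulled back from `M` along `v : B₀ ⟶ F`.
  obtain ⟨K, ι, p, hK⟩ := distinguished_cocone_triangle₂ (v ≫ ψ)
  obtain ⟨k, hk₁, hk₂⟩ := exists_middle hK hT (𝟙 A₀) v (by simp)
  rw [Category.id_comp] at hk₁
  refine ⟨K, ⟨A₀, B₀, hA, hB, ι, p, _, hK⟩, k, fun Z h hh => ?_⟩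
  obtain ⟨h', hh'⟩ := exists_desc₂ hT h (by
    rw [← hk₁, Category.assoc, hh, comp_zero])
  obtain ⟨z, hz⟩ := exists_desc₃ hK (v ≫ h') (by
    rw [reassoc_of% hk₂, ← hh', hh])
  have hgψ : g ≫ ψ = 0 := comp_distTriang_mor_zero₂₃ _ hT
  -- Subtracting `ψ ≫ z` does not change the composite with `g`, and makes `v` kill `h'`.
  obtain ⟨t, ht⟩ := exists_desc₂ hF (h' - ψ ≫ z) (by
    rw [Preadditive.comp_sub, hz, Category.assoc, sub_self])
  refine ⟨D₀, hD, g ≫ w, t, ?_⟩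
  rw [Category.assoc, ← ht, hh', Preadditive.comp_sub, reassoc_of% hgψ, zero_comp, sub_zero]

/-- `(A * B) * D ⊆ A ⋄ (B * D)`, in terms of the factorization criterion. -/
lemma fac_assoc_right {A B D : Set C} {M : C} (hM : M ∈ star (star A B) D) :
    Fac A (star B D) M := by
  obtain ⟨E, D₀, ⟨A₀, B₀, hA, hB, a, b, x, hE⟩, hD, e, m, δ, hT⟩ := hM
  -- `F` is the extension of `D₀` by `B₀` pushed out from `M` along `b : E ⟶ B₀`.
  obtain ⟨F, v, w, hF⟩ := distinguished_cocone_triangle₂ (δ ≫ b⟦(1 : ℤ)⟧')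
  obtain ⟨k, hk₁, hk₂⟩ := exists_middle hT hF b (𝟙 D₀) (by simp)
  rw [Category.comp_id] at hk₂
  refine ⟨A₀, hA, a ≫ e, fun Z h hh => ?_⟩
  obtain ⟨h₁, hh₁⟩ := exists_desc₂ hE (e ≫ h) (by simpa using hh)
  have hδe : δ ≫ e⟦(1 : ℤ)⟧' = 0 := comp_distTriang_mor_zero₃₁ _ hT
  -- A map of triangles to `Z ⟶ Z ⟶ 0` is an extension of `h₁` along `v`.
  obtain ⟨h₂, hh₂, -⟩ := exists_middle hF
    (contractible_distinguished Z) h₁ 0 (by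
      change (δ ≫ b⟦(1 : ℤ)⟧') ≫ h₁⟦(1 : ℤ)⟧' = 0 ≫ 0
      rw [Category.assoc, ← Functor.map_comp, ← hh₁, Functor.map_comp, reassoc_of% hδe]
      simp)
  rw [Category.comp_id] at hh₂
  obtain ⟨t, ht⟩ := exists_desc₂ hT (h - k ≫ h₂) (by
    rw [Preadditive.comp_sub, reassoc_of% hk₁, hh₂, hh₁, sub_self])
  refine ⟨F, ⟨B₀, D₀, hB, hD, v, w, _, hF⟩, k, h₂ + w ≫ t, ?_⟩
  rw [Preadditive.comp_add, ← reassoc_of% hk₂, ← ht]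
  abel

lemma subset_hull (I : Set C) : I ⊆ hull I := fun _ h => .base h

/-- The operation `⋄` is associative on subcategories closed under shifts, sums and summands. -/
lemma diamond_assoc {A B D : Set C} (hA : hull A ⊆ A) (hB : hull B ⊆ B) (hD : hull D ⊆ D) :
    diamond A (diamond B D) = diamond (diamond A B) D := by
  ext M
  rw [mem_diamond_iff hA (hull_diamond_subset _ _), mem_diamond_iff (hull_diamond_subset _ _) hD]
  constructor
  · intro hM
    obtain ⟨E, hE, i, r, hir⟩ := (hM.right_star hB hD).exists_retract
    exact ((fac_assoc_left hE).of_retract i r hir).mono (subset_hull _) subset_rfl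
  · intro hM
    obtain ⟨E, hE, i, r, hir⟩ := (hM.left_star hA hB).exists_retract
    exact ((fac_assoc_right hE).of_retract i r hir).mono subset_rfl (subset_hull _)

/-! ### Levels -/

lemma diamond_level (G : C) (i j : ℕ) :
    diamond (level G i) (level G j) = level G (i + j + 1) := by
  induction j with
  | zero => rfl
  | succ j ih =>
    change diamond (level G i) (diamond (level G j) (hull {G})) =
      diamond (level G (i + j + 1)) (hull {G})
    rw [diamond_assoc (hull_level_subset _ _) (hull_level_subset _ _) (hull_hull_subset _), ih]

lemma exists_level_subset {G H : C} {n : ℕ} (hH : H ∈ level G n) (k : ℕ) :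
    ∃ m : ℕ, level H k ⊆ level G m := by
  have h₀ : hull {H} ⊆ level G n :=
    (hull_mono (Set.singleton_subset_iff.2 hH)).trans (hull_level_subset G n)
  induction k with
  | zero => exact ⟨n, h₀⟩
  | succ k ih =>
    obtain ⟨m, hm⟩ := ih
    exact ⟨m + n + 1, (diamond_mono hm h₀).trans (diamond_level G m n).subset⟩

end Rouquier

open Rouquier

/-- In any triangulated category, `⟨G⟩ᵢ ⋄ ⟨G⟩ⱼ = ⟨G⟩_{i+j+1}`; consequently,
if the category possesses a strong generator, then every classical generator is a strong
generator. -/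
theorem diamond_level_and_classical_generator_is_strong
    {C : Type u} [Category.{v} C] [HasZeroObject C] [HasShift C ℤ] [Preadditive C]
    [∀ n : ℤ, (shiftFunctor C n).Additive] [Pretriangulated C] :
    (∀ (G : C) (i j : ℕ), diamond (level G i) (level G j) = level G (i + j + 1)) ∧
    ((∃ H : C, IsStrongGenerator H) →
      ∀ G : C, IsClassicalGenerator G → IsStrongGenerator G) := by
  refine ⟨diamond_level, ?_⟩
  rintro ⟨H, g, hg⟩ G hG
  have hH : H ∈ ⋃ i : ℕ, level G i := hG ▸ Set.mem_univ H
  obtain ⟨n, hn⟩ := Set.mem_iUnion.1 hH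
  obtain ⟨m, hm⟩ := exists_level_subset hn g
  exact ⟨m, Set.univ_subset_iff.1 (hg ▸ hm)⟩
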